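/- Let g : ℝ → ℝ be a function and suppose there exists a Hamel basis H of ℝ (a basis of ℝ as a vector space over ℚ) such that the restriction of g to H ∪ {0} is constant. Then g can be written as a composition g = h ∘ f of two Hamel functions h, f : ℝ → ℝ. -/

import Mathlib

/-- The graph of a function `f : ℝ → ℝ`, as a subset of `ℝ × ℝ`. -/
def graph (f : ℝ → ℝ) : Set (ℝ × ℝ) := Set.range fun x => (x, f x)

/-- `f : ℝ → ℝ` is a Hamel function if its graph is a basis of `ℝ × ℝ`
as a vector space over `ℚ`, i.e. the graph is `ℚ`-linearly independent and
spans `ℝ × ℝ` over `ℚ`. -/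
def IsHamelFunction (f : ℝ → ℝ) : Prop :=
  LinearIndependent ℚ ((↑) : graph f → ℝ × ℝ) ∧
    Submodule.span ℚ (graph f) = ⊤

/-!
Let `b` be a basis of `M` with as many elements as `M`. The complement of `b` then has the same
cardinality, so it can be enumerated as `e j`, with `j` running over the indices of `b`. A map
sending every `b i` to the same value `a`, and `e j` to `b j`, has as its graph the image of the
basis `(b i, 0), (0, b j)` of `M × M` under the shears `b i ↦ a` and `b j ↦ e j`, provided that the
second one kills `a`. This holds for `a = b j₀` with `e j₀ = 0`, which gives the inner factor `f`.
It also holds for `a = 0`; a Hamel map remains one after adding a linear map, and adding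
`b j ↦ g (e j)` in this case gives the outer factor `h`. Both `h ∘ f` and `g` take the value
`g (e j)` at `e j`, and the value `g (e j₀) = g 0` on the basis.
-/

open Module Set
open scoped Cardinal

section HamelMap

variable {R M N ι κ : Type*} [Ring R] [AddCommGroup M] [Module R M] [AddCommGroup N] [Module R N]

variable (R) in
/-- A Hamel map between two modules is a map whose graph is a basis of their product. The basis is
indexed by the domain, so that linear independence refers to the family `x ↦ (x, f x)`. -/
def IsHamelMap (f : M → N) : Prop :=
  ∃ B : Basis M R (M × N), ∀ x, B x = (x, f x)

namespace IsHamelMap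

lemma of_basis {f : M → N} (B : Basis ι R (M × N)) (σ : ι ≃ M)
    (hB : ∀ i, B i = (σ i, f (σ i))) : IsHamelMap R f :=
  ⟨B.reindex σ, fun x => by rw [Basis.reindex_apply, hB, σ.apply_symm_apply]⟩

lemma add_linearMap {f : M → N} (hf : IsHamelMap R f) (L : M →ₗ[R] N) :
    IsHamelMap R fun x => f x + L x := by
  obtain ⟨B, hB⟩ := hf
  exact ⟨B.map ((LinearEquiv.refl R M).skewProd (.refl R N) L), fun x => by simp [hB]⟩

lemma isHamelFunction {f : ℝ → ℝ} (hf : IsHamelMap ℚ f) : IsHamelFunction f := by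
  obtain ⟨B, hB⟩ := hf
  have hgraph : graph f = range B := congrArg range (funext hB).symm
  rw [IsHamelFunction, hgraph]
  exact ⟨B.linearIndependent.linearIndepOn_id, B.span_eq⟩

end IsHamelMap

lemma exists_basis_prod_sumElim (b : Basis ι R M) (c : Basis κ R N) (u : ι → N) (v : κ → M)
    (hv : ∀ i, c.constr ℕ v (u i) = 0) :
    ∃ B : Basis (ι ⊕ κ) R (M × N),
      ⇑B = Sum.elim (fun i => (b i, u i)) (fun j => (v j, c j)) := by
  let shearSnd : (M × N) ≃ₗ[R] M × N := (LinearEquiv.refl R M).skewProd (.refl R N) (b.constr ℕ u)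
  let shearFst : (M × N) ≃ₗ[R] M × N := LinearEquiv.prodComm R M N ≪≫ₗ
    (LinearEquiv.refl R N).skewProd (.refl R M) (c.constr ℕ v) ≪≫ₗ LinearEquiv.prodComm R N M
  refine ⟨(b.prod c).map (shearSnd ≪≫ₗ shearFst), ?_⟩
  ext1 (i | j)
  · simp [shearSnd, shearFst, hv]
  · simp [shearSnd, shearFst]

variable [Nontrivial R]

lemma exists_isHamelMap_apply_basis_eq (b : Basis ι R M) (c : Basis κ R N)
    (e : κ ≃ ↥(range b)ᶜ) (u : ι → N) (hu : ∀ i, c.constr ℕ (fun j => (e j : M)) (u i) = 0) :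
    ∃ f : M → N, IsHamelMap R f ∧ (∀ i, f (b i) = u i) ∧ ∀ j, f (e j) = c j := by
  classical
  let σ : ι ⊕ κ ≃ M :=
    ((Equiv.ofInjective b b.injective).sumCongr e).trans (Equiv.Set.sumCompl (range b))
  let f : M → N := Sum.elim u c ∘ σ.symm
  have hfσ (s : ι ⊕ κ) : f (σ s) = Sum.elim u c s := by simp [f]
  obtain ⟨B, hB⟩ := exists_basis_prod_sumElim b c u (fun j => (e j : M)) hu
  refine ⟨f, .of_basis B σ ?_, fun i => hfσ (.inl i), fun j => hfσ (.inr j)⟩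
  rintro (i | j) <;> rw [hB, hfσ] <;> rfl

lemma basis_add_basis_notMem_range (b : Basis ι R M) (i j : ι) : b i + b j ∉ range b := by
  rintro ⟨k, hk⟩
  have hsum : (1 : R) = 1 + 1 := by
    simpa only [map_add, Basis.sumCoords_self_apply] using congrArg b.sumCoords hk
  exact one_ne_zero (left_eq_add.1 hsum)

lemma nonempty_equiv_compl_range_basis (b : Basis ι R M) (φ : M ↪ ι) :
    Nonempty (ι ≃ ↥(range b)ᶜ) := by
  let translate : ι ↪ ↥(range b)ᶜ :=
    ⟨fun i => ⟨b i + b (φ 0), basis_add_basis_notMem_range b i (φ 0)⟩,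
      fun i j hij => b.injective (add_right_cancel (congrArg Subtype.val hij))⟩
  exact translate.antisymm ((Function.Embedding.subtype _).trans φ)

theorem stmt_3_general (g : M → M) (H : Set M)
    (hind : LinearIndependent R ((↑) : H → M))
    (hspan : Submodule.span R H = ⊤)
    (hcard : #H = #M)
    (hconst : ∀ x ∈ H, g x = g 0) :
    ∃ h f : M → M, IsHamelMap R h ∧ IsHamelMap R f ∧ g = h ∘ f := by
  let b : Basis H R M := .mk hind (by simp [hspan])
  have hb (x : H) : b x = x := by simp [b]
  obtain ⟨φ⟩ := Cardinal.eq.1 hcard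
  obtain ⟨e⟩ := nonempty_equiv_compl_range_basis b φ.symm.toEmbedding
  obtain ⟨j₀, hj₀⟩ := e.surjective ⟨0, fun ⟨i, hi⟩ => b.ne_zero i hi⟩
  obtain ⟨h₀, hh₀, h₀_basis, -⟩ :=
    exists_isHamelMap_apply_basis_eq b b e (fun _ => 0) (by simp)
  obtain ⟨f, hf, f_basis, f_compl⟩ :=
    exists_isHamelMap_apply_basis_eq b b e (fun _ => b j₀) (by simp [hj₀])
  let L : M →ₗ[R] M := b.constr ℕ fun j => g (e j)
  have h_basis (j : H) : h₀ (b j) + L (b j) = g (e j) := by simp [h₀_basis, L]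
  refine ⟨fun x => h₀ x + L x, f, hh₀.add_linearMap L, hf, funext fun x => ?_⟩
  by_cases hx : x ∈ range b
  · obtain ⟨i, rfl⟩ := hx
    rw [Function.comp_apply, f_basis, h_basis, hj₀, hb, hconst i i.2]
  · obtain ⟨j, hj⟩ := e.surjective ⟨x, hx⟩
    obtain rfl : (e j : M) = x := congrArg Subtype.val hj
    rw [Function.comp_apply, f_compl, h_basis]

end HamelMap

lemma mk_eq_mk_real_of_basis {ι : Type} (b : Basis ι ℚ ℝ) : #ι = #ℝ := by
  rw [b.mk_eq_rank'', Real.rank_rat_real, Cardinal.mk_real]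

theorem stmt_3 (g : ℝ → ℝ) (H : Set ℝ)
    (hind : LinearIndependent ℚ ((↑) : H → ℝ))
    (hspan : Submodule.span ℚ H = ⊤)
    (hconst : ∃ c : ℝ, ∀ x ∈ H ∪ {0}, g x = c) :
    ∃ h f : ℝ → ℝ, IsHamelFunction h ∧ IsHamelFunction f ∧ g = h ∘ f := by
  obtain ⟨c, hc⟩ := hconst
  obtain ⟨h, f, hh, hf, hg⟩ := stmt_3_general g H hind hspan
    (mk_eq_mk_real_of_basis (.mk hind (by simp [hspan])))
    fun x hx => (hc x (.inl hx)).trans (hc 0 (.inr rfl)).symm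
  exact ⟨h, f, hh.isHamelFunction, hf.isHamelFunction, hg⟩
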